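/- Let Y ∈ ℳ be a second-order critical point of the factorized problem with deficient column rank, i.e., rank(Y) < p. Then Y is globally optimal for the factorized problem and X = Y Yᵀ is globally optimal for the SDP: Tr(C Y Yᵀ) ≤ Tr(C X) for every X ∈ 𝒞. -/

import Mathlib

/-!
Since `rank Y < p`, there is `z ≠ 0` with `Y z = 0`, and then every rank-one direction `x zᵀ` is
tangent to `ℳ` at `Y`. The second-order condition along it reads `0 ≤ (xᵀ S x) (zᵀ z)`, so `S` is
positive semidefinite. Together with `S Y = 0` this makes `S` a dual certificate: on the constraint
set `Tr(C X)` equals `Tr(S X)` plus the constant `⟨μ, b⟩`, where `Tr(S X) ≥ 0` for `X ⪰ 0` and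
`Tr(S Y Yᵀ) = 0`.
-/

open Matrix MeasureTheory

noncomputable section

/-- Frobenius inner product `⟨A, B⟩ = Tr(Aᵀ B)`. -/
def frobInner {n p : ℕ} (A B : Matrix (Fin n) (Fin p) ℝ) : ℝ := (Aᵀ * B).trace

/-- Frobenius norm. -/
def frobNorm {n p : ℕ} (A : Matrix (Fin n) (Fin p) ℝ) : ℝ := Real.sqrt (frobInner A A)

/-- The constraint map 𝒜, `𝒜(X) i = Tr(A i * X)`. -/
def Aop {n m : ℕ} (A : Fin m → Matrix (Fin n) (Fin n) ℝ) (X : Matrix (Fin n) (Fin n) ℝ) :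
    Fin m → ℝ := fun i => (A i * X).trace

/-- The adjoint 𝒜*, `𝒜*(μ) = ∑ i, μ i • A i`. -/
def Aadj {n m : ℕ} (A : Fin m → Matrix (Fin n) (Fin n) ℝ) (μ : Fin m → ℝ) :
    Matrix (Fin n) (Fin n) ℝ := ∑ i, μ i • A i

/-- The SDP feasible set 𝒞. -/
def sdpFeas {n m : ℕ} (A : Fin m → Matrix (Fin n) (Fin n) ℝ) (b : Fin m → ℝ) :
    Set (Matrix (Fin n) (Fin n) ℝ) := {X | X.IsSymm ∧ Aop A X = b ∧ X.PosSemidef}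

/-- Optimal value `f* = inf {Tr(C X) : X ∈ 𝒞}` of the SDP. -/
def fstar {n m : ℕ} (A : Fin m → Matrix (Fin n) (Fin n) ℝ) (b : Fin m → ℝ)
    (C : Matrix (Fin n) (Fin n) ℝ) : ℝ := sInf ((fun X => (C * X).trace) '' sdpFeas A b)

/-- The factorized feasible set `ℳ_p = {Y : 𝒜(Y Yᵀ) = b}`. -/
def facFeas {n m : ℕ} (A : Fin m → Matrix (Fin n) (Fin n) ℝ) (b : Fin m → ℝ) (p : ℕ) :
    Set (Matrix (Fin n) (Fin p) ℝ) := {Y | Aop A (Y * Yᵀ) = b}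

/-- Tangent space `T_Yℳ = {Ydot : 𝒜(Ydot Yᵀ + Y Ydotᵀ) = 0}`. -/
def tangentSet {n m p : ℕ} (A : Fin m → Matrix (Fin n) (Fin n) ℝ)
    (Y : Matrix (Fin n) (Fin p) ℝ) : Set (Matrix (Fin n) (Fin p) ℝ) :=
  {Ydot | Aop A (Ydot * Yᵀ + Y * Ydotᵀ) = 0}

/-- Second-order critical point of the factorized problem. -/
def IsSOCP {n m p : ℕ} (A : Fin m → Matrix (Fin n) (Fin n) ℝ) (b : Fin m → ℝ)
    (C : Matrix (Fin n) (Fin n) ℝ) (Y : Matrix (Fin n) (Fin p) ℝ) : Prop :=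
  Y ∈ facFeas A b p ∧ ∃ μ : Fin m → ℝ,
    (C - Aadj A μ) * Y = 0 ∧
    ∀ Ydot ∈ tangentSet A Y, 0 ≤ frobInner Ydot ((C - Aadj A μ) * Ydot)

/-- The real vector space of symmetric `n × n` matrices. -/
def symmSpace (n : ℕ) : Submodule ℝ (Matrix (Fin n) (Fin n) ℝ) where
  carrier := {X | X.IsSymm}
  add_mem' := fun ha hb => ha.add hb
  zero_mem' := Matrix.isSymm_zero
  smul_mem' := fun c X hX => by
    show (c • X)ᵀ = c • X
    rw [Matrix.transpose_smul, hX]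

instance (n : ℕ) : MeasurableSpace ↥(symmSpace n) := borel _

/-- A set of symmetric matrices is null if it has measure zero for every additive Haar
measure on the finite-dimensional real vector space of symmetric `n × n` matrices. -/
def IsNullSymmSet (n : ℕ) (S : Set (Matrix (Fin n) (Fin n) ℝ)) : Prop :=
  ∀ μ : Measure ↥(symmSpace n), μ.IsAddHaarMeasure →
    μ {C : ↥(symmSpace n) | (C : Matrix (Fin n) (Fin n) ℝ) ∈ S} = 0

theorem exists_mulVec_eq_zero_of_rank_lt_card {m n R : Type*} [Fintype n] [CommRing R]
    [Nontrivial R] (M : Matrix m n R) (hM : M.rank < Fintype.card n) :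
    ∃ v ≠ 0, M *ᵥ v = 0 := by
  by_contra! h
  have hker : LinearMap.ker M.mulVecLin = ⊥ :=
    LinearMap.ker_eq_bot'.2 fun v hv => by_contra fun hne => h v hne hv
  have hrank : M.rank = Fintype.card n :=
    (LinearMap.finrank_range_of_inj (LinearMap.ker_eq_bot.1 hker)).trans
      (Module.finrank_fintype_fun_eq_card R)
  exact hM.ne hrank

section TraceOfProduct

open scoped ComplexOrder MatrixOrder

theorem trace_mul_nonneg_of_posSemidef {n 𝕜 : Type*} [Fintype n] [RCLike 𝕜]
    {S X : Matrix n n 𝕜} (hS : S.PosSemidef) (hX : X.PosSemidef) : 0 ≤ (S * X).trace := by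
  classical
  obtain ⟨B, rfl⟩ : ∃ B, X = Bᴴ * B := CStarAlgebra.nonneg_iff_eq_star_mul_self.1 hX.nonneg
  calc
    0 ≤ (B * S * Bᴴ).trace := (hS.mul_mul_conjTranspose_same B).trace_nonneg
    _ = (S * (Bᴴ * B)).trace := by rw [Matrix.mul_assoc, trace_mul_comm, Matrix.mul_assoc]

end TraceOfProduct

section ConstraintMap

variable {n m : ℕ} {A : Fin m → Matrix (Fin n) (Fin n) ℝ}

theorem isSymm_Aadj (hA : ∀ i, (A i).IsSymm) (μ : Fin m → ℝ) : (Aadj A μ).IsSymm := by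
  simp only [IsSymm, Aadj, transpose_sum, transpose_smul, (hA _).eq]

theorem trace_Aadj_mul (μ : Fin m → ℝ) (X : Matrix (Fin n) (Fin n) ℝ) :
    (Aadj A μ * X).trace = μ ⬝ᵥ Aop A X := by
  simp only [Aadj, Aop, dotProduct, Finset.sum_mul, trace_sum, smul_mul, trace_smul, smul_eq_mul]

theorem trace_mul_eq_trace_sub_Aadj_mul_add (C : Matrix (Fin n) (Fin n) ℝ) (μ : Fin m → ℝ)
    (X : Matrix (Fin n) (Fin n) ℝ) :
    (C * X).trace = ((C - Aadj A μ) * X).trace + μ ⬝ᵥ Aop A X := by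
  rw [Matrix.sub_mul, trace_sub, trace_Aadj_mul, sub_add_cancel]

theorem trace_mul_le_of_posSemidef_sub_Aadj {C X₀ X : Matrix (Fin n) (Fin n) ℝ} {μ : Fin m → ℝ}
    (hS : (C - Aadj A μ).PosSemidef) (hX₀ : ((C - Aadj A μ) * X₀).trace = 0)
    (hX : X.PosSemidef) (hAX : Aop A X₀ = Aop A X) : (C * X₀).trace ≤ (C * X).trace := by
  calc
    (C * X₀).trace = μ ⬝ᵥ Aop A X := by
      rw [trace_mul_eq_trace_sub_Aadj_mul_add C μ, hX₀, zero_add, hAX]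
    _ ≤ ((C - Aadj A μ) * X).trace + μ ⬝ᵥ Aop A X :=
      le_add_of_nonneg_left (trace_mul_nonneg_of_posSemidef hS hX)
    _ = (C * X).trace := (trace_mul_eq_trace_sub_Aadj_mul_add C μ X).symm

theorem self_mul_transpose_mem_sdpFeas {p : ℕ} {b : Fin m → ℝ} {Z : Matrix (Fin n) (Fin p) ℝ}
    (hZ : Z ∈ facFeas A b p) : Z * Zᵀ ∈ sdpFeas A b :=
  ⟨by rw [IsSymm, transpose_mul, transpose_transpose], hZ, posSemidef_self_mul_conjTranspose Z⟩

end ConstraintMap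

section RankOneDirections

variable {n p : ℕ}

theorem frobInner_vecMulVec_vecMulVec (x y : Fin n → ℝ) (z w : Fin p → ℝ) :
    frobInner (vecMulVec x z) (vecMulVec y w) = (x ⬝ᵥ y) * (z ⬝ᵥ w) := by
  rw [frobInner, transpose_vecMulVec, vecMulVec_mul_vecMulVec, trace_vecMulVec, dotProduct_smul,
    smul_eq_mul]

theorem posSemidef_of_frobInner_vecMulVec_nonneg {S : Matrix (Fin n) (Fin n) ℝ} (hS : S.IsSymm)
    {z : Fin p → ℝ} (hz : z ≠ 0)
    (h : ∀ x, 0 ≤ frobInner (vecMulVec x z) (S * vecMulVec x z)) : S.PosSemidef := by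
  refine .of_dotProduct_mulVec_nonneg hS fun x => ?_
  have hzz : 0 < z ⬝ᵥ z := dotProduct_star_self_pos_iff.2 hz
  have hx : 0 ≤ (x ⬝ᵥ S *ᵥ x) * (z ⬝ᵥ z) := by
    rw [← frobInner_vecMulVec_vecMulVec, ← mul_vecMulVec]
    exact h x
  exact nonneg_of_mul_nonneg_left hx hzz

variable {m : ℕ} (A : Fin m → Matrix (Fin n) (Fin n) ℝ) {Y : Matrix (Fin n) (Fin p) ℝ}

theorem vecMulVec_mem_tangentSet {z : Fin p → ℝ} (hz : Y *ᵥ z = 0) (x : Fin n → ℝ) :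
    vecMulVec x z ∈ tangentSet A Y := by
  have hleft : vecMulVec x z * Yᵀ = 0 := by
    rw [vecMulVec_mul, vecMul_transpose, hz, vecMulVec_zero]
  have hright : Y * (vecMulVec x z)ᵀ = 0 := by
    rw [transpose_vecMulVec, mul_vecMulVec, hz, zero_vecMulVec]
  funext i
  simp only [hleft, hright, Aop, add_zero, Matrix.mul_zero, trace_zero, Pi.zero_apply]

theorem posSemidef_of_nonneg_on_tangentSet {S : Matrix (Fin n) (Fin n) ℝ} (hS : S.IsSymm)
    (hrank : Y.rank < p) (h : ∀ Ydot ∈ tangentSet A Y, 0 ≤ frobInner Ydot (S * Ydot)) :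
    S.PosSemidef := by
  obtain ⟨z, hz, hYz⟩ := exists_mulVec_eq_zero_of_rank_lt_card Y (by rwa [Fintype.card_fin])
  exact posSemidef_of_frobInner_vecMulVec_nonneg hS hz fun x =>
    h _ (vecMulVec_mem_tangentSet A hYz x)

end RankOneDirections

/-- a column-rank-deficient second-order critical point is globally optimal
for the factorized problem, and `Y Yᵀ` is globally optimal for the SDP. -/
theorem rank_deficient_socp_is_global_optimum
    (n m p : ℕ) (hn : 0 < n) (hm : 0 < m) (hp : 0 < p)
    (A : Fin m → Matrix (Fin n) (Fin n) ℝ) (hA : ∀ i, (A i).IsSymm) (b : Fin m → ℝ)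
    (C : Matrix (Fin n) (Fin n) ℝ) (hC : C.IsSymm)
    (Y : Matrix (Fin n) (Fin p) ℝ) (hrank : Y.rank < p)
    (hsocp : IsSOCP A b C Y) :
    (∀ Z ∈ facFeas A b p, (C * (Y * Yᵀ)).trace ≤ (C * (Z * Zᵀ)).trace) ∧
    (∀ X ∈ sdpFeas A b, (C * (Y * Yᵀ)).trace ≤ (C * X).trace) := by
  obtain ⟨hY, μ, hSY, hcurv⟩ := hsocp
  have hS : (C - Aadj A μ).PosSemidef :=
    posSemidef_of_nonneg_on_tangentSet A (hC.sub (isSymm_Aadj hA μ)) hrank hcurv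
  have hslack : ((C - Aadj A μ) * (Y * Yᵀ)).trace = 0 := by
    rw [← Matrix.mul_assoc, hSY, Matrix.zero_mul, trace_zero]
  have hsdp : ∀ X ∈ sdpFeas A b, (C * (Y * Yᵀ)).trace ≤ (C * X).trace :=
    fun X ⟨_, hAX, hX⟩ => trace_mul_le_of_posSemidef_sub_Aadj hS hslack hX (hY.trans hAX.symm)
  exact ⟨fun Z hZ => hsdp _ (self_mul_transpose_mem_sdpFeas hZ), hsdp⟩

end
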